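/- Let C be a Jacobi matrix with weights {a_n} and diagonal {b_n}. Assume: (a) a_n → ∞; (b) ∑_{n≥0} 1/a_n² = ∞; (c) ∑_{n≥0} [ (a_{n+1}/a_n)² − 1 ]⁻ < ∞; (d) limsup_{n→∞} |b_n|/a_n < 2; (e) ∑_{n≥0} |b_{n+1} − b_n|/a_n < ∞. Then C is self-adjoint, σ_p(C) = ∅, and σ(C) = ℝ. -/

import Mathlib

/-!
Divergence of `∑ 1 / aₙ` (Carleman's condition, a consequence of (b)) makes `C` self-adjoint: for
`x, y` in the maximal domain the boundary term `aₙ (x̄ₙ₊₁ yₙ - x̄ₙ yₙ₊₁)` in Green's formula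
converges, and a nonzero limit would force `1 / aₙ` to be dominated by a summable sequence.

For real `l`, let `u` solve the recurrence `aₙ uₙ + (bₙ₊₁ - l) uₙ₊₁ + aₙ₊₁ uₙ₊₂ = 0`, with no
condition at the index `0`. The quadratic form
`Sₙ = aₙ² (|uₙ|² + |uₙ₊₁|²) + aₙ (bₙ - l) Re (ūₙ uₙ₊₁)` is eventually comparable to
`aₙ² (|uₙ|² + |uₙ₊₁|²)` by (a) and (d), and its relative decrease at each step is at most a constant
times the terms in (c) and (e). So if `u ≠ 0`, then `Sₙ` is bounded below by a positive constant,
and (b) gives `u ∉ ℓ²`. Hence `l` is not an eigenvalue, but also the first basis vector `δ₀` is not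
of the form `(C - l) u`, since such a `u ∈ ℓ²` would solve the recurrence; thus `l ∈ σ(C)`. Nonreal
numbers lie outside the spectrum of a self-adjoint operator.
-/

open Filter Topology

noncomputable section

/-- Membership in the weighted ℓ² space with weight `w`. -/
def MemL2w (w : ℕ → ℝ) (f : ℕ → ℂ) : Prop :=
  Summable fun n => w n * ‖f n‖ ^ 2

/-- The weighted ℓ² inner product. -/
def innerW (w : ℕ → ℝ) (f g : ℕ → ℂ) : ℂ :=
  ∑' n, (w n : ℂ) * star (f n) * g n

/-- The formal tridiagonal action of the Jacobi matrix with off-diagonal entries `a`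
and diagonal entries `b`:  `(Cx)₀ = b₀x₀ + a₀x₁`,
`(Cx)ₙ = aₙ₋₁xₙ₋₁ + bₙxₙ + aₙxₙ₊₁` for `n ≥ 1`. -/
def jacobiAct (a b : ℕ → ℝ) (x : ℕ → ℂ) : ℕ → ℂ
  | 0 => (b 0 : ℂ) * x 0 + (a 0 : ℂ) * x 1
  | n + 1 => (a n : ℂ) * x n + (b (n + 1) : ℂ) * x (n + 1) + (a (n + 1) : ℂ) * x (n + 2)

/-- The maximal domain of the formal operator `T` inside the weighted ℓ² space. -/
def DomW (w : ℕ → ℝ) (T : (ℕ → ℂ) → ℕ → ℂ) : Set (ℕ → ℂ) :=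
  {x | MemL2w w x ∧ MemL2w w (T x)}

/-- `T`, on its maximal domain in weighted ℓ², is self-adjoint:
the graph of the adjoint operator coincides with the graph of `T`. -/
def IsSelfAdjointW (w : ℕ → ℝ) (T : (ℕ → ℂ) → ℕ → ℂ) : Prop :=
  ∀ y z : ℕ → ℂ, MemL2w w y → MemL2w w z →
    ((∀ x ∈ DomW w T, innerW w (T x) y = innerW w x z) ↔ (y ∈ DomW w T ∧ T y = z))

/-- The point spectrum (set of eigenvalues) of `T` on its maximal domain. -/
def eigenW (w : ℕ → ℝ) (T : (ℕ → ℂ) → ℕ → ℂ) : Set ℂ :=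
  {l | ∃ x ∈ DomW w T, x ≠ 0 ∧ T x = fun n => l * x n}

/-- The spectrum of `T`: those `l` for which `T - l` is not a bijection from the maximal
domain onto the weighted ℓ² space (for a closed operator this is the usual spectrum). -/
def spectrumW (w : ℕ → ℝ) (T : (ℕ → ℂ) → ℕ → ℂ) : Set ℂ :=
  {l | ¬ ((∀ x ∈ DomW w T, T x = (fun n => l * x n) → x = 0) ∧
          ∀ y : ℕ → ℂ, MemL2w w y → ∃ x ∈ DomW w T, (fun n => T x n - l * x n) = y)}

/-- The essential spectrum: the set of accumulation points of the spectrum. -/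
def essSpectrumW (w : ℕ → ℝ) (T : (ℕ → ℂ) → ℕ → ℂ) : Set ℂ :=
  {z | AccPt z (𝓟 (spectrumW w T))}

section SymmetricOperators

open scoped ComplexConjugate LinearPMap

variable {𝕜 E : Type*} [RCLike 𝕜] [NormedAddCommGroup E] [InnerProductSpace 𝕜 E]

/-- The operator `A - z`, as a linear map on the domain of the unbounded operator `A`. -/
def subScalar (A : E →ₗ.[𝕜] E) (z : 𝕜) : A.domain →ₗ[𝕜] E :=
  A.toFun - z • A.domain.subtype

lemma subScalar_apply (A : E →ₗ.[𝕜] E) (z : 𝕜) (x : A.domain) :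
    subScalar A z x = A x - z • (x : E) :=
  rfl

variable {A : E →ₗ.[𝕜] E}

lemma im_inner_apply_self_eq_zero (hA : A.IsFormalAdjoint A) (x : A.domain) :
    RCLike.im (inner 𝕜 (x : E) (A x)) = 0 := by
  rw [← RCLike.conj_eq_iff_im, inner_conj_symm, hA]

lemma abs_im_mul_norm_le_norm_subScalar (hA : A.IsFormalAdjoint A) (z : 𝕜) (x : A.domain) :
    |RCLike.im z| * ‖(x : E)‖ ≤ ‖subScalar A z x‖ := by
  have h_im : RCLike.im (inner 𝕜 (x : E) (subScalar A z x)) = -(RCLike.im z * ‖(x : E)‖ ^ 2) := by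
    rw [subScalar_apply, inner_sub_right, map_sub, im_inner_apply_self_eq_zero hA, inner_smul_right,
      inner_self_eq_norm_sq_to_K, ← RCLike.ofReal_pow, RCLike.im_mul_ofReal, zero_sub]
  have h_le : |RCLike.im z| * ‖(x : E)‖ ^ 2 ≤ ‖(x : E)‖ * ‖subScalar A z x‖ := by
    calc |RCLike.im z| * ‖(x : E)‖ ^ 2
        = |RCLike.im (inner 𝕜 (x : E) (subScalar A z x))| := by
          rw [h_im, abs_neg, abs_mul, abs_of_nonneg (sq_nonneg ‖(x : E)‖)]
      _ ≤ ‖inner 𝕜 (x : E) (subScalar A z x)‖ := RCLike.abs_im_le_norm _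
      _ ≤ ‖(x : E)‖ * ‖subScalar A z x‖ := norm_inner_le_norm _ _
  rcases (norm_nonneg (x : E)).eq_or_lt with h0 | h0
  · simp [← h0]
  · exact le_of_mul_le_mul_left (by linarith) h0

lemma subScalar_injective_of_im_ne_zero (hA : A.IsFormalAdjoint A) {z : 𝕜} (hz : RCLike.im z ≠ 0) :
    Function.Injective (subScalar A z) := by
  refine (injective_iff_map_eq_zero _).2 fun x hx => ?_
  have h := abs_im_mul_norm_le_norm_subScalar hA z x
  rw [hx, norm_zero] at h
  have hx0 := nonpos_of_mul_nonpos_right h (abs_pos.2 hz)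
  exact Subtype.ext (norm_le_zero_iff.1 hx0)

lemma norm_mk_apply_le_mul_norm_subScalar (hA : A.IsFormalAdjoint A) {z : 𝕜} (hz : RCLike.im z ≠ 0)
    (x : A.domain) :
    ‖((x : E), A x)‖ ≤ (1 + (1 + ‖z‖) / |RCLike.im z|) * ‖subScalar A z x‖ := by
  have hx : ‖(x : E)‖ ≤ ‖subScalar A z x‖ / |RCLike.im z| := by
    rw [le_div_iff₀' (abs_pos.2 hz)]
    exact abs_im_mul_norm_le_norm_subScalar hA z x
  have hAx : ‖A x‖ ≤ ‖subScalar A z x‖ + ‖z‖ * ‖(x : E)‖ := by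
    rw [← norm_smul, subScalar_apply]
    exact norm_le_norm_sub_add _ _
  calc ‖((x : E), A x)‖
      ≤ ‖subScalar A z x‖ + (1 + ‖z‖) * ‖(x : E)‖ := by
        have := norm_nonneg (subScalar A z x)
        refine max_le ?_ ?_ <;> nlinarith [norm_nonneg (x : E), norm_nonneg z]
    _ ≤ ‖subScalar A z x‖ + (1 + ‖z‖) * (‖subScalar A z x‖ / |RCLike.im z|) := by gcongr
    _ = (1 + (1 + ‖z‖) / |RCLike.im z|) * ‖subScalar A z x‖ := by ring

/-- On the graph of `A`, a complete space, the map `(x, y) ↦ y - z x` is bounded below. -/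
lemma isClosed_range_subScalar_of_im_ne_zero [CompleteSpace E] (hA : A.IsFormalAdjoint A)
    (hcl : A.IsClosed) {z : 𝕜} (hz : RCLike.im z ≠ 0) :
    IsClosed (Set.range (subScalar A z)) := by
  have : CompleteSpace A.graph := hcl.completeSpace_coe
  let B : A.graph →L[𝕜] E :=
    (ContinuousLinearMap.snd 𝕜 E E - z • ContinuousLinearMap.fst 𝕜 E E).comp A.graph.subtypeL
  have hB (x : A.domain) : B ⟨(x, A x), A.mem_graph x⟩ = subScalar A z x := rfl
  have h_range : Set.range B = Set.range (subScalar A z) := by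
    refine Set.Subset.antisymm ?_ ?_
    · rintro _ ⟨⟨⟨_, _⟩, hp⟩, rfl⟩
      obtain ⟨x, rfl, rfl⟩ := (A.mem_graph_iff).1 hp
      exact ⟨x, (hB x).symm⟩
    · rintro _ ⟨x, rfl⟩
      exact ⟨_, hB x⟩
  have h_below (p : A.graph) : ‖p‖ ≤ (1 + (1 + ‖z‖) / |RCLike.im z|) * ‖B p‖ := by
    obtain ⟨⟨_, _⟩, hp⟩ := p
    obtain ⟨x, rfl, rfl⟩ := (A.mem_graph_iff).1 hp
    exact norm_mk_apply_le_mul_norm_subScalar hA hz x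
  rw [← h_range]
  exact (B.antilipschitz_of_bound (K := ⟨1 + (1 + ‖z‖) / |RCLike.im z|, by positivity⟩)
    h_below).isClosed_range B.uniformContinuous

lemma mem_graph_adjoint_of_mem_orthogonal_range_subScalar [CompleteSpace E]
    (hd : Dense (A.domain : Set E)) {z : 𝕜} {y : E} (hy : y ∈ (subScalar A z).rangeᗮ) :
    (y, conj z • y) ∈ A†.graph := by
  rw [LinearPMap.adjoint_graph_eq_graph_adjoint hd, Submodule.mem_adjoint_iff]
  intro u v huv
  obtain ⟨x, rfl, rfl⟩ := (A.mem_graph_iff).1 huv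
  rw [inner_smul_right, ← inner_smul_left, ← inner_sub_left]
  exact (Submodule.mem_orthogonal _ _).1 hy _ ⟨x, rfl⟩

/-- The orthogonal complement of the range of `A - z` consists of eigenvectors for `conj z`. -/
theorem bijective_subScalar_of_im_ne_zero [CompleteSpace E] (hA : IsSelfAdjoint A) {z : 𝕜}
    (hz : RCLike.im z ≠ 0) : Function.Bijective (subScalar A z) := by
  have hd := hA.dense_domain
  have h_symm : A.IsFormalAdjoint A := by
    simpa only [LinearPMap.isSelfAdjoint_def.1 hA] using LinearPMap.adjoint_isFormalAdjoint hd
  have hz' : RCLike.im (conj z) ≠ 0 := by simpa using hz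
  refine ⟨subScalar_injective_of_im_ne_zero h_symm hz, LinearMap.range_eq_top.1 ?_⟩
  have : CompleteSpace (subScalar A z).range :=
    (isClosed_range_subScalar_of_im_ne_zero h_symm hA.isClosed hz).completeSpace_coe
  rw [← Submodule.orthogonal_eq_bot_iff, Submodule.eq_bot_iff]
  intro y hy
  have h_graph := mem_graph_adjoint_of_mem_orthogonal_range_subScalar hd hy
  rw [LinearPMap.isSelfAdjoint_def.1 hA, LinearPMap.mem_graph_iff] at h_graph
  obtain ⟨x, rfl, hx⟩ := h_graph
  have hx0 : x = 0 := subScalar_injective_of_im_ne_zero h_symm hz' (by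
    rw [subScalar_apply, hx, sub_self, map_zero])
  rw [hx0, Submodule.coe_zero]

end SymmetricOperators

section SquareSummable

open scoped lp

lemma memL2w_one_iff {f : ℕ → ℂ} : MemL2w (fun _ => 1) f ↔ Memℓp f 2 := by
  simp [MemL2w, memℓp_gen_iff]

lemma memL2w_one_iff_exists {f : ℕ → ℂ} : MemL2w (fun _ => 1) f ↔ ∃ u : ℓ²(ℕ, ℂ), ⇑u = f :=
  ⟨fun hf => ⟨⟨f, memL2w_one_iff.1 hf⟩, rfl⟩, by rintro ⟨u, rfl⟩; exact memL2w_one_iff.2 u.2⟩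

lemma summable_norm_sq {ι E : Type*} [NormedAddCommGroup E] (x : lp (fun _ : ι => E) 2) :
    Summable fun i => ‖x i‖ ^ 2 := by
  simpa using (lp.memℓp x).summable (by norm_num)

lemma innerW_one_eq_inner (f g : ℓ²(ℕ, ℂ)) : innerW (fun _ => 1) f g = inner ℂ f g := by
  simp [innerW, lp.inner_eq_tsum, mul_comm]

lemma dense_of_forall_single_mem {ι 𝕜 : Type*} [RCLike 𝕜] [DecidableEq ι]
    {p : Submodule 𝕜 ℓ²(ι, 𝕜)} (hp : ∀ i, lp.single 2 i 1 ∈ p) : Dense (p : Set ℓ²(ι, 𝕜)) := by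
  intro f
  refine mem_closure_of_tendsto (lp.hasSum_single ENNReal.ofNat_ne_top f)
    (Eventually.of_forall fun s => p.sum_mem fun i _ => ?_)
  have h := p.smul_mem (f i) (hp i)
  rwa [← lp.single_smul, smul_eq_mul, mul_one] at h

/-- The operator in `ℓ²` given by the restriction of `T` to its maximal domain
`{x ∈ ℓ² | T x ∈ ℓ²}`: the Hilbert space counterpart of `DomW 1 T`. -/
def maximalOperator (T : (ℕ → ℂ) →ₗ[ℂ] (ℕ → ℂ)) : ℓ²(ℕ, ℂ) →ₗ.[ℂ] ℓ²(ℕ, ℂ) where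
  domain :=
    { carrier := {x | Memℓp (T x) 2}
      zero_mem' := by
        change Memℓp (T 0) 2
        rw [map_zero]
        exact zero_memℓp
      add_mem' := fun {x y} hx hy => by
        change Memℓp (T (⇑x + ⇑y)) 2
        rw [map_add]
        exact Memℓp.add hx hy
      smul_mem' := fun c x hx => by
        change Memℓp (T (c • ⇑x)) 2
        rw [map_smul]
        exact Memℓp.const_smul hx c }
  toFun :=
    { toFun := fun x => ⟨T x, x.2⟩
      map_add' := fun x y => lp.ext (map_add T ⇑(x : ℓ²(ℕ, ℂ)) ⇑(y : ℓ²(ℕ, ℂ)))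
      map_smul' := fun c x => lp.ext (map_smul T c ⇑(x : ℓ²(ℕ, ℂ))) }

variable {T : (ℕ → ℂ) →ₗ[ℂ] (ℕ → ℂ)}

lemma mem_domain_maximalOperator {x : ℓ²(ℕ, ℂ)} :
    x ∈ (maximalOperator T).domain ↔ Memℓp (T x) 2 :=
  Iff.rfl

lemma coe_maximalOperator_apply (x : (maximalOperator T).domain) :
    ⇑(maximalOperator T x) = T (x : ℓ²(ℕ, ℂ)) :=
  rfl

lemma mem_graph_maximalOperator {x y : ℓ²(ℕ, ℂ)} :
    (x, y) ∈ (maximalOperator T).graph ↔ T x = y := by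
  rw [LinearPMap.mem_graph_iff]
  constructor
  · rintro ⟨x, rfl, rfl⟩
    rfl
  · intro h
    exact ⟨⟨x, mem_domain_maximalOperator.2 (h ▸ lp.memℓp y)⟩, rfl, lp.ext h⟩

lemma mem_domW_one_iff {x : ℕ → ℂ} :
    x ∈ DomW (fun _ => 1) T ↔ ∃ u : (maximalOperator T).domain, ⇑(u : ℓ²(ℕ, ℂ)) = x := by
  constructor
  · rintro ⟨hx, hTx⟩
    exact ⟨⟨⟨x, memL2w_one_iff.1 hx⟩, memL2w_one_iff.1 hTx⟩, rfl⟩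
  · rintro ⟨u, rfl⟩
    exact ⟨memL2w_one_iff.2 (lp.memℓp _), memL2w_one_iff.2 u.2⟩

theorem isSelfAdjointW_one_of_isSelfAdjoint (hT : IsSelfAdjoint (maximalOperator T)) :
    IsSelfAdjointW (fun _ => 1) T := by
  intro y z hy hz
  obtain ⟨y, rfl⟩ := memL2w_one_iff_exists.1 hy
  obtain ⟨z, rfl⟩ := memL2w_one_iff_exists.1 hz
  have h_adj : (y, z) ∈ (maximalOperator T).graph ↔
      ∀ u : (maximalOperator T).domain,
        inner ℂ (maximalOperator T u) y = inner ℂ (u : ℓ²(ℕ, ℂ)) z := by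
    rw [← LinearPMap.isSelfAdjoint_def.1 hT,
      LinearPMap.adjoint_graph_eq_graph_adjoint hT.dense_domain, Submodule.mem_adjoint_iff,
      LinearPMap.isSelfAdjoint_def.1 hT]
    simp [LinearPMap.mem_graph_iff, sub_eq_zero]
  have h_dom : (∀ x ∈ DomW (fun _ => 1) T, innerW (fun _ => 1) (T x) y = innerW (fun _ => 1) x z) ↔
      ∀ u : (maximalOperator T).domain,
        inner ℂ (maximalOperator T u) y = inner ℂ (u : ℓ²(ℕ, ℂ)) z := by
    simp only [mem_domW_one_iff, forall_exists_index, forall_apply_eq_imp_iff,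
      ← coe_maximalOperator_apply, innerW_one_eq_inner]
  rw [h_dom, ← h_adj, mem_graph_maximalOperator]
  exact ⟨fun h => ⟨⟨hy, h ▸ hz⟩, h⟩, And.right⟩

theorem mem_spectrumW_one_iff {l : ℂ} :
    l ∈ spectrumW (fun _ => 1) T ↔ ¬ Function.Bijective (subScalar (maximalOperator T) l) := by
  have h_subScalar (u : (maximalOperator T).domain) :
      (fun n => T (u : ℓ²(ℕ, ℂ)) n - l * (u : ℓ²(ℕ, ℂ)) n) = ⇑(subScalar (maximalOperator T) l u) :=
    rfl
  have h_eigen (u : (maximalOperator T).domain) :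
      (T (u : ℓ²(ℕ, ℂ)) = fun n => l * (u : ℓ²(ℕ, ℂ)) n) ↔
        subScalar (maximalOperator T) l u = 0 := by
    rw [lp.eq_zero_iff_coeFn_eq_zero, ← h_subScalar]
    simp only [funext_iff, Pi.zero_apply, sub_eq_zero]
  have h_inj : (∀ x ∈ DomW (fun _ => 1) T, T x = (fun n => l * x n) → x = 0) ↔
      Function.Injective (subScalar (maximalOperator T) l) := by
    simp only [mem_domW_one_iff, forall_exists_index, forall_apply_eq_imp_iff,
      injective_iff_map_eq_zero, h_eigen, ← lp.eq_zero_iff_coeFn_eq_zero,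
      ZeroMemClass.coe_eq_zero]
  have h_surj : (∀ y, MemL2w (fun _ => 1) y →
        ∃ x ∈ DomW (fun _ => 1) T, (fun n => T x n - l * x n) = y) ↔
      Function.Surjective (subScalar (maximalOperator T) l) := by
    simp only [mem_domW_one_iff, memL2w_one_iff_exists, forall_exists_index, exists_exists_eq_and,
      h_subScalar, Function.Surjective, lp.ext_iff]
    exact ⟨fun h f => h _ f rfl, by rintro h _ f rfl; exact h f⟩
  exact not_congr (and_congr h_inj h_surj)

lemma eigenW_subset_spectrumW (w : ℕ → ℝ) (T : (ℕ → ℂ) → ℕ → ℂ) : eigenW w T ⊆ spectrumW w T := by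
  rintro l ⟨x, hx, hne, he⟩ ⟨hinj, -⟩
  exact hne (hinj x hx he)

theorem spectrumW_one_subset_range_ofReal (hT : IsSelfAdjoint (maximalOperator T)) :
    spectrumW (fun _ => 1) T ⊆ Set.range ((↑) : ℝ → ℂ) := by
  intro l hl
  by_contra hr
  have him : l.im ≠ 0 := fun h => hr ⟨l.re, Complex.ext rfl h.symm⟩
  exact mem_spectrumW_one_iff.1 hl (bijective_subScalar_of_im_ne_zero hT him)

end SquareSummable

section Series

lemma summable_one_div_of_eventually_le_mul {w q : ℕ → ℝ} {c : ℝ} (hc : 0 < c)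
    (hw : ∀ n, 0 < w n) (hq : Summable q) (h : ∀ᶠ n in atTop, c ≤ w n * q n) :
    Summable fun n => 1 / w n := by
  refine Summable.of_norm_bounded_eventually_nat (hq.div_const c) ?_
  filter_upwards [h] with n hn
  rw [Real.norm_of_nonneg (one_div_pos.2 (hw n)).le, div_le_div_iff₀ (hw n) hc]
  linarith

lemma not_summable_one_div_of_not_summable_one_div_sq {a : ℕ → ℝ}
    (ha : ¬ Summable fun n => 1 / a n ^ 2) : ¬ Summable fun n => 1 / a n := by
  refine fun hs => ha (summable_of_isBigO_nat hs ?_)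
  have h_mul := (hs.tendsto_atTop_zero.isBigO_one ℝ).mul
    (Asymptotics.isBigO_refl (fun n => 1 / a n) atTop)
  simpa only [← sq, one_mul, one_div_pow] using h_mul

/-- An instance of `∏ (1 - d k) ≥ 1 - ∑ d k`. -/
lemma mul_one_sub_sum_le_of_one_sub_mul_le {S d : ℕ → ℝ} (hd0 : ∀ n, 0 ≤ d n) (hd1 : ∀ n, d n ≤ 1)
    (hS0 : 0 ≤ S 0) (hS : ∀ n, (1 - d n) * S n ≤ S (n + 1)) (n : ℕ) :
    S 0 * (1 - ∑ k ∈ Finset.range n, d k) ≤ S n := by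
  induction n with
  | zero => simp
  | succ n ih =>
    have h_sum : 0 ≤ ∑ k ∈ Finset.range n, d k := Finset.sum_nonneg fun k _ => hd0 k
    have h_cross : 0 ≤ S 0 * (d n * ∑ k ∈ Finset.range n, d k) :=
      mul_nonneg hS0 (mul_nonneg (hd0 n) h_sum)
    rw [Finset.sum_range_succ]
    calc S 0 * (1 - (∑ k ∈ Finset.range n, d k + d n))
        ≤ (1 - d n) * (S 0 * (1 - ∑ k ∈ Finset.range n, d k)) := by linarith
      _ ≤ (1 - d n) * S n := mul_le_mul_of_nonneg_left ih (sub_nonneg.2 (hd1 n))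
      _ ≤ S (n + 1) := hS n

lemma exists_pos_eventually_le_of_one_sub_mul_le {S d : ℕ → ℝ} (hd0 : ∀ n, 0 ≤ d n)
    (hd : Summable d) (hS : ∀ᶠ n in atTop, (1 - d n) * S n ≤ S (n + 1))
    (hpos : ∀ᶠ n in atTop, 0 < S n) : ∃ c > 0, ∀ᶠ n in atTop, c ≤ S n := by
  have h_tail : ∀ᶠ M in atTop, ∑' k, d (k + M) < 1 / 2 :=
    (tendsto_sum_nat_add d).eventually (gt_mem_nhds one_half_pos)
  obtain ⟨M, hM⟩ := (h_tail.and (hS.and hpos)).exists_forall_of_atTop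
  have hd_shift : Summable fun k => d (k + M) := (summable_nat_add_iff M).2 hd
  have h_tail_le : ∀ n, ∑ k ∈ Finset.range n, d (k + M) ≤ 1 / 2 := fun n =>
    (hd_shift.sum_le_tsum _ fun k _ => hd0 _).trans (hM M le_rfl).1.le
  have hd_le_one : ∀ n, d (n + M) ≤ 1 := fun n =>
    ((hd_shift.le_tsum n fun k _ => hd0 _).trans (hM M le_rfl).1.le).trans one_half_lt_one.le
  have hSM : 0 < S M := (hM M le_rfl).2.2
  have h_lower := mul_one_sub_sum_le_of_one_sub_mul_le (S := fun n => S (n + M))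
    (fun n => hd0 (n + M)) hd_le_one (by simpa using hSM.le) fun n => by
      simpa only [add_right_comm] using (hM (n + M) (Nat.le_add_left M n)).2.1
  refine ⟨S M / 2, half_pos hSM, eventually_atTop.2 ⟨M, fun n hn => ?_⟩⟩
  obtain ⟨m, rfl⟩ := Nat.exists_eq_add_of_le' hn
  refine le_trans ?_ (h_lower m)
  simp only [zero_add]
  nlinarith [h_tail_le m]

lemma exists_lt_eventually_abs_sub_le_mul {a b : ℕ → ℝ} {c : ℝ} (ha : Tendsto a atTop atTop)
    (hb : limsup (fun n => ((|b n| / a n : ℝ) : EReal)) atTop < (c : EReal)) (l : ℝ) :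
    ∃ r < c, ∀ᶠ n in atTop, |b n - l| ≤ r * a n := by
  obtain ⟨q, hlim_q, hqc⟩ := EReal.lt_iff_exists_real_btwn.1 hb
  obtain ⟨r, hqr, hrc⟩ := exists_between (EReal.coe_lt_coe_iff.1 hqc)
  refine ⟨r, hrc, ?_⟩
  filter_upwards [eventually_lt_of_limsup_lt hlim_q, ha.eventually_gt_atTop 0,
    ha.eventually_ge_atTop (|l| / (r - q))] with n hbn ha_pos hln
  have hbn' : |b n| < q * a n := (div_lt_iff₀ ha_pos).1 (EReal.coe_lt_coe_iff.1 hbn)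
  have hln' : |l| ≤ a n * (r - q) := (div_le_iff₀ (sub_pos.2 hqr)).1 hln
  linarith [abs_sub (b n) l]

end Series

section Energy

variable {E : Type*} [NormedAddCommGroup E] [InnerProductSpace ℝ E]
  {a b : ℕ → ℝ} {u : ℕ → E}

/-- The quadratic form `aₙ² (‖uₙ‖² + ‖uₙ₊₁‖²) + aₙ bₙ ⟪uₙ, uₙ₊₁⟫`, whose increments along solutions
of `aₙ uₙ + bₙ₊₁ uₙ₊₁ + aₙ₊₁ uₙ₊₂ = 0` only involve the increments of `a ^ 2` and `b`. -/
def energy (a b : ℕ → ℝ) (u : ℕ → E) (n : ℕ) : ℝ :=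
  a n ^ 2 * (‖u n‖ ^ 2 + ‖u (n + 1)‖ ^ 2) + a n * b n * inner ℝ (u n) (u (n + 1))

lemma abs_real_inner_le_half_add_sq (x y : E) : |inner ℝ x y| ≤ (‖x‖ ^ 2 + ‖y‖ ^ 2) / 2 := by
  linarith [abs_real_inner_le_norm x y, two_mul_le_add_sq ‖x‖ ‖y‖]

lemma energy_succ_sub_energy {n : ℕ}
    (hu : a n • u n + b (n + 1) • u (n + 1) + a (n + 1) • u (n + 2) = 0) :
    energy a b u (n + 1) - energy a b u n = (a (n + 1) ^ 2 - a n ^ 2) * ‖u (n + 1)‖ ^ 2 +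
      a n * (b (n + 1) - b n) * inner ℝ (u n) (u (n + 1)) := by
  have h_next : a (n + 1) • u (n + 2) = -(a n • u n + b (n + 1) • u (n + 1)) :=
    (neg_eq_of_add_eq_zero_right hu).symm
  have h_norm : a (n + 1) ^ 2 * ‖u (n + 2)‖ ^ 2 = a n ^ 2 * ‖u n‖ ^ 2 +
      2 * (a n * b (n + 1) * inner ℝ (u n) (u (n + 1))) + b (n + 1) ^ 2 * ‖u (n + 1)‖ ^ 2 := by
    have h := congrArg (‖·‖ ^ 2) h_next
    simp only [norm_neg, norm_add_sq_real, norm_smul, real_inner_smul_left, real_inner_smul_right,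
      mul_pow, Real.norm_eq_abs, sq_abs] at h
    linarith
  have h_inner : a (n + 1) * inner ℝ (u (n + 1)) (u (n + 2)) =
      -(a n * inner ℝ (u n) (u (n + 1)) + b (n + 1) * ‖u (n + 1)‖ ^ 2) := by
    have h := congrArg (inner ℝ (u (n + 1))) h_next
    rwa [inner_neg_right, inner_add_right, real_inner_smul_right, real_inner_smul_right,
      real_inner_smul_right, real_inner_comm (u n), real_inner_self_eq_norm_sq] at h
  simp only [energy]
  linear_combination h_norm + b (n + 1) * h_inner

lemma abs_energy_sub_le {r : ℝ} {n : ℕ} (ha : 0 ≤ a n) (hb : |b n| ≤ r * a n) :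
    |energy a b u n - a n ^ 2 * (‖u n‖ ^ 2 + ‖u (n + 1)‖ ^ 2)| ≤
      r / 2 * (a n ^ 2 * (‖u n‖ ^ 2 + ‖u (n + 1)‖ ^ 2)) := by
  calc |energy a b u n - a n ^ 2 * (‖u n‖ ^ 2 + ‖u (n + 1)‖ ^ 2)|
      = a n * |b n| * |inner ℝ (u n) (u (n + 1))| := by
        rw [energy, add_sub_cancel_left, abs_mul, abs_mul, abs_of_nonneg ha]
    _ ≤ a n * (r * a n) * ((‖u n‖ ^ 2 + ‖u (n + 1)‖ ^ 2) / 2) := by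
        have := (abs_nonneg (b n)).trans hb
        gcongr
        exact abs_real_inner_le_half_add_sq _ _
    _ = r / 2 * (a n ^ 2 * (‖u n‖ ^ 2 + ‖u (n + 1)‖ ^ 2)) := by ring

/-- The relative loss of energy at step `n`: the quantity whose summability is assumed in conditions
(c) and (e). -/
def energyLoss (a b : ℕ → ℝ) (n : ℕ) : ℝ :=
  max (-((a (n + 1) / a n) ^ 2 - 1)) 0 + |b (n + 1) - b n| / a n

lemma energy_sub_le_energy_succ {n : ℕ} (ha : 0 < a n)
    (hu : a n • u n + b (n + 1) • u (n + 1) + a (n + 1) • u (n + 2) = 0) :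
    energy a b u n - energyLoss a b n * (a n ^ 2 * (‖u n‖ ^ 2 + ‖u (n + 1)‖ ^ 2)) ≤
      energy a b u (n + 1) := by
  set Q := ‖u n‖ ^ 2 + ‖u (n + 1)‖ ^ 2
  set m := max (-((a (n + 1) / a n) ^ 2 - 1)) 0
  have h_weights : -(m * (a n ^ 2 * Q)) ≤ (a (n + 1) ^ 2 - a n ^ 2) * ‖u (n + 1)‖ ^ 2 := by
    have h_factor : a (n + 1) ^ 2 - a n ^ 2 = ((a (n + 1) / a n) ^ 2 - 1) * a n ^ 2 := by
      field_simp
    calc -(m * (a n ^ 2 * Q)) ≤ -(m * (a n ^ 2 * ‖u (n + 1)‖ ^ 2)) := by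
          have : 0 ≤ m := le_max_right _ _
          gcongr
          exact le_add_of_nonneg_left (sq_nonneg _)
      _ = -m * (a n ^ 2 * ‖u (n + 1)‖ ^ 2) := by ring
      _ ≤ ((a (n + 1) / a n) ^ 2 - 1) * (a n ^ 2 * ‖u (n + 1)‖ ^ 2) := by
          gcongr
          exact neg_le.1 (le_max_left _ _)
      _ = (a (n + 1) ^ 2 - a n ^ 2) * ‖u (n + 1)‖ ^ 2 := by rw [h_factor]; ring
  have h_diag : |a n * (b (n + 1) - b n) * inner ℝ (u n) (u (n + 1))| ≤
      |b (n + 1) - b n| / a n * (a n ^ 2 * Q) := by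
    calc |a n * (b (n + 1) - b n) * inner ℝ (u n) (u (n + 1))|
        = a n * |b (n + 1) - b n| * |inner ℝ (u n) (u (n + 1))| := by
          rw [abs_mul, abs_mul, abs_of_pos ha]
      _ ≤ a n * |b (n + 1) - b n| * Q := by
          gcongr
          exact (abs_real_inner_le_half_add_sq _ _).trans (half_le_self (by positivity))
      _ = |b (n + 1) - b n| / a n * (a n ^ 2 * Q) := by field_simp
  have h_step := energy_succ_sub_energy hu
  have h_loss : energyLoss a b n * (a n ^ 2 * Q) =
      m * (a n ^ 2 * Q) + |b (n + 1) - b n| / a n * (a n ^ 2 * Q) := add_mul _ _ _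
  linarith [neg_le_of_abs_le h_diag]

lemma energyLoss_nonneg {n : ℕ} (ha : 0 ≤ a n) : 0 ≤ energyLoss a b n :=
  add_nonneg (le_max_right _ _) (div_nonneg (abs_nonneg _) ha)

lemma one_sub_mul_energy_le_energy_succ {r : ℝ} {n : ℕ} (hr : r < 2) (ha : 0 < a n)
    (hu : a n • u n + b (n + 1) • u (n + 1) + a (n + 1) • u (n + 2) = 0)
    (hb : |b n| ≤ r * a n) :
    (1 - energyLoss a b n / (1 - r / 2)) * energy a b u n ≤ energy a b u (n + 1) := by
  have hr' : 0 < 1 - r / 2 := by linarith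
  have h_lower : a n ^ 2 * (‖u n‖ ^ 2 + ‖u (n + 1)‖ ^ 2) ≤ energy a b u n / (1 - r / 2) := by
    rw [le_div_iff₀ hr']
    linarith [neg_le_of_abs_le (abs_energy_sub_le (u := u) ha.le hb)]
  calc (1 - energyLoss a b n / (1 - r / 2)) * energy a b u n
      = energy a b u n - energyLoss a b n * (energy a b u n / (1 - r / 2)) := by ring
    _ ≤ energy a b u n - energyLoss a b n * (a n ^ 2 * (‖u n‖ ^ 2 + ‖u (n + 1)‖ ^ 2)) := by
        have := energyLoss_nonneg (b := b) ha.le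
        gcongr
    _ ≤ energy a b u (n + 1) := energy_sub_le_energy_succ ha hu

lemma eq_zero_of_consecutive_eq_zero (ha : ∀ n, a n ≠ 0)
    (hu : ∀ n, a n • u n + b (n + 1) • u (n + 1) + a (n + 1) • u (n + 2) = 0) {m n : ℕ}
    (hnm : n ≤ m) (hm : u m = 0) (hm' : u (m + 1) = 0) : u n = 0 := by
  suffices u n = 0 ∧ u (n + 1) = 0 from this.1
  induction hnm using Nat.decreasingInduction with
  | self => exact ⟨hm, hm'⟩
  | of_succ k _ ih =>
    have h := hu k
    rw [ih.1, ih.2, smul_zero, smul_zero, add_zero, add_zero] at h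
    exact ⟨(smul_eq_zero_iff_right (ha k)).1 h, ih.1⟩

theorem eq_zero_of_summable_norm_sq_of_recurrence {r : ℝ} (hr : r < 2) (ha : ∀ n, 0 < a n)
    (ha2 : ¬ Summable fun n => 1 / a n ^ 2) (hb : ∀ᶠ n in atTop, |b n| ≤ r * a n)
    (hloss : Summable (energyLoss a b))
    (hu : ∀ n, a n • u n + b (n + 1) • u (n + 1) + a (n + 1) • u (n + 2) = 0)
    (hsum : Summable fun n => ‖u n‖ ^ 2) : u = 0 := by
  by_contra hne
  obtain ⟨k, hk⟩ := Function.ne_iff.1 hne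
  have h_pos : ∀ n ≥ k, 0 < a n ^ 2 * (‖u n‖ ^ 2 + ‖u (n + 1)‖ ^ 2) := by
    intro n hn
    refine mul_pos (pow_pos (ha n) 2) ((by positivity : (0 : ℝ) ≤ _).lt_of_ne' fun h => hk ?_)
    have h0 := (add_eq_zero_iff_of_nonneg (sq_nonneg _) (sq_nonneg _)).1 h
    exact eq_zero_of_consecutive_eq_zero (fun n => (ha n).ne') hu hn
      (by simpa using h0.1) (by simpa using h0.2)
  have h_energy_pos : ∀ᶠ n in atTop, 0 < energy a b u n := by
    filter_upwards [hb, eventually_ge_atTop k] with n hbn hn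
    have h_lower := neg_le_of_abs_le (abs_energy_sub_le (u := u) (ha n).le hbn)
    nlinarith [h_pos n hn]
  obtain ⟨c, hc, hcS⟩ := exists_pos_eventually_le_of_one_sub_mul_le
    (fun n => div_nonneg (energyLoss_nonneg (ha n).le) (by linarith)) (hloss.div_const (1 - r / 2))
    (hb.mono fun n hbn => one_sub_mul_energy_le_energy_succ hr (ha n) (hu n) hbn) h_energy_pos
  refine ha2 (summable_one_div_of_eventually_le_mul hc (fun n => pow_pos (ha n) 2)
    ((hsum.add ((summable_nat_add_iff 1).2 hsum)).mul_left 2) ?_)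
  filter_upwards [hcS, hb, eventually_ge_atTop k] with n hcn hbn hn
  have h_upper := le_of_abs_le (abs_energy_sub_le (u := u) (ha n).le hbn)
  nlinarith [h_pos n hn]

end Energy

section Jacobi

open scoped lp ComplexConjugate LinearPMap

/-- `jacobiAct` as a linear map on the space of all sequences. -/
def jacobiLinearMap (a b : ℕ → ℝ) : (ℕ → ℂ) →ₗ[ℂ] (ℕ → ℂ) where
  toFun := jacobiAct a b
  map_add' x y := by
    ext (_ | n) <;> simp only [jacobiAct, Pi.add_apply] <;> ring
  map_smul' c x := by
    ext (_ | n) <;> simp only [jacobiAct, Pi.smul_apply, smul_eq_mul, RingHom.id_apply] <;> ring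

lemma coe_jacobiLinearMap (a b : ℕ → ℝ) : ⇑(jacobiLinearMap a b) = jacobiAct a b :=
  rfl

/-- The `n`-th column of the Jacobi matrix, as an element of `ℓ²`. -/
def jacobiColumn (a b : ℕ → ℝ) : ℕ → ℓ²(ℕ, ℂ)
  | 0 => lp.single 2 0 (b 0 : ℂ) + lp.single 2 1 (a 0 : ℂ)
  | n + 1 => lp.single 2 n (a n : ℂ) + lp.single 2 (n + 1) (b (n + 1) : ℂ) +
      lp.single 2 (n + 2) (a (n + 1) : ℂ)

lemma inner_jacobiColumn (a b : ℕ → ℝ) (n : ℕ) (y : ℓ²(ℕ, ℂ)) :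
    inner ℂ (jacobiColumn a b n) y = jacobiAct a b y n := by
  cases n <;>
    simp [jacobiColumn, jacobiAct, lp.inner_single_left, mul_comm]

lemma jacobiAct_single (a b : ℕ → ℝ) (n : ℕ) :
    jacobiAct a b (lp.single 2 n 1 : ℓ²(ℕ, ℂ)) = jacobiColumn a b n := by
  ext m
  rcases n with _ | n <;> rcases m with _ | m <;>
    simp [jacobiColumn, jacobiAct, Pi.single_apply] <;> grind

lemma single_mem_domain_maximalOperator_jacobi (a b : ℕ → ℝ) (n : ℕ) :
    lp.single 2 n 1 ∈ (maximalOperator (jacobiLinearMap a b)).domain := by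
  rw [mem_domain_maximalOperator, coe_jacobiLinearMap, jacobiAct_single]
  exact lp.memℓp _

lemma dense_domain_maximalOperator_jacobi (a b : ℕ → ℝ) :
    Dense ((maximalOperator (jacobiLinearMap a b)).domain : Set ℓ²(ℕ, ℂ)) :=
  dense_of_forall_single_mem (single_mem_domain_maximalOperator_jacobi a b)

lemma adjoint_maximalOperator_jacobi_le (a b : ℕ → ℝ) :
    (maximalOperator (jacobiLinearMap a b))† ≤ maximalOperator (jacobiLinearMap a b) := by
  refine LinearPMap.le_of_le_graph ?_
  rintro ⟨y, z⟩ hyz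
  rw [LinearPMap.adjoint_graph_eq_graph_adjoint (dense_domain_maximalOperator_jacobi a b),
    Submodule.mem_adjoint_iff] at hyz
  refine mem_graph_maximalOperator.2 (funext fun n => ?_)
  have h := hyz _ _ (mem_graph_maximalOperator.2 (jacobiAct_single a b n))
  simpa [coe_jacobiLinearMap, inner_jacobiColumn, lp.inner_single_left, sub_eq_zero] using h

/-- The Wronskian of two sequences, with the first one conjugated: the boundary term at `n` in
Green's formula for the Jacobi matrix. -/
def wronskian (a : ℕ → ℝ) (x y : ℕ → ℂ) (n : ℕ) : ℂ :=
  a n * (conj (x (n + 1)) * y n - conj (x n) * y (n + 1))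

lemma sum_range_succ_jacobiAct_sub_eq_wronskian (a b : ℕ → ℝ) (x y : ℕ → ℂ) (n : ℕ) :
    ∑ k ∈ Finset.range (n + 1),
      (conj (jacobiAct a b x k) * y k - conj (x k) * jacobiAct a b y k) = wronskian a x y n := by
  induction n with
  | zero =>
    simp only [zero_add, Finset.sum_range_one, jacobiAct, wronskian, map_add, map_mul,
      Complex.conj_ofReal]
    ring
  | succ n ih =>
    rw [Finset.sum_range_succ, ih]
    simp only [jacobiAct, wronskian, map_add, map_mul, Complex.conj_ofReal]
    ring

lemma norm_wronskian_le {a : ℕ → ℝ} {n : ℕ} (ha : 0 ≤ a n) (x y : ℕ → ℂ) :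
    ‖wronskian a x y n‖ ≤
      a n * ((‖x n‖ ^ 2 + ‖x (n + 1)‖ ^ 2) + (‖y n‖ ^ 2 + ‖y (n + 1)‖ ^ 2)) := by
  rw [wronskian, norm_mul, Complex.norm_of_nonneg ha]
  gcongr
  calc ‖conj (x (n + 1)) * y n - conj (x n) * y (n + 1)‖
      ≤ ‖x (n + 1)‖ * ‖y n‖ + ‖x n‖ * ‖y (n + 1)‖ := by
        simpa only [norm_mul, RCLike.norm_conj] using
          norm_sub_le (conj (x (n + 1)) * y n) (conj (x n) * y (n + 1))
    _ ≤ (‖x n‖ ^ 2 + ‖x (n + 1)‖ ^ 2) + (‖y n‖ ^ 2 + ‖y (n + 1)‖ ^ 2) := by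
        nlinarith [two_mul_le_add_sq ‖x (n + 1)‖ ‖y n‖, two_mul_le_add_sq ‖x n‖ ‖y (n + 1)‖,
          sq_nonneg ‖x n‖, sq_nonneg ‖x (n + 1)‖, sq_nonneg ‖y n‖, sq_nonneg ‖y (n + 1)‖]

variable {a b : ℕ → ℝ}

lemma eq_zero_of_tendsto_wronskian (ha : ∀ n, 0 < a n) (hC : ¬ Summable fun n => 1 / a n)
    {x y : ℕ → ℂ} (hx : Summable fun n => ‖x n‖ ^ 2) (hy : Summable fun n => ‖y n‖ ^ 2) {L : ℂ}
    (hL : Tendsto (wronskian a x y) atTop (𝓝 L)) : L = 0 := by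
  by_contra hne
  have hL0 : 0 < ‖L‖ := norm_pos_iff.2 hne
  refine hC (summable_one_div_of_eventually_le_mul (half_pos hL0) ha
    ((hx.add ((summable_nat_add_iff 1).2 hx)).add (hy.add ((summable_nat_add_iff 1).2 hy))) ?_)
  filter_upwards [hL.norm.eventually_const_le (half_lt_self hL0)] with n hn
  exact hn.trans (norm_wronskian_le (ha n).le x y)

lemma isFormalAdjoint_maximalOperator_jacobi (ha : ∀ n, 0 < a n)
    (hC : ¬ Summable fun n => 1 / a n) :
    (maximalOperator (jacobiLinearMap a b)).IsFormalAdjoint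
      (maximalOperator (jacobiLinearMap a b)) := by
  intro x y
  have h_green := ((lp.hasSum_inner (𝕜 := ℂ) (maximalOperator (jacobiLinearMap a b) x)
    (y : ℓ²(ℕ, ℂ))).sub (lp.hasSum_inner (𝕜 := ℂ) (x : ℓ²(ℕ, ℂ))
      (maximalOperator (jacobiLinearMap a b) y))).tendsto_sum_nat
  simp only [RCLike.inner_apply', coe_maximalOperator_apply, coe_jacobiLinearMap] at h_green
  have h_wronskian := h_green.comp (tendsto_add_atTop_nat 1)
  simp only [Function.comp_def, sum_range_succ_jacobiAct_sub_eq_wronskian] at h_wronskian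
  exact sub_eq_zero.1 (eq_zero_of_tendsto_wronskian ha hC (summable_norm_sq _)
    (summable_norm_sq _) h_wronskian)

/-- Carleman's criterion. -/
theorem isSelfAdjoint_maximalOperator_jacobi (ha : ∀ n, 0 < a n)
    (hC : ¬ Summable fun n => 1 / a n) :
    IsSelfAdjoint (maximalOperator (jacobiLinearMap a b)) :=
  le_antisymm (adjoint_maximalOperator_jacobi_le a b)
    ((isFormalAdjoint_maximalOperator_jacobi ha hC).le_adjoint
      (dense_domain_maximalOperator_jacobi a b))

/-- `u` is a generalized eigenvector of the Jacobi matrix for `l`: it solves the eigenvalue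
recurrence at every index except `0`, so that the two initial values of `u` are free. -/
def IsGeneralizedEigenvector (a b : ℕ → ℝ) (l : ℂ) (u : ℕ → ℂ) : Prop :=
  ∀ n, jacobiAct a b u (n + 1) = l * u (n + 1)

theorem IsGeneralizedEigenvector.eq_zero_of_summable_norm_sq (ha : ∀ n, 0 < a n)
    (h_tendsto : Tendsto a atTop atTop) (ha2 : ¬ Summable fun n => 1 / a n ^ 2)
    (hb : limsup (fun n => ((|b n| / a n : ℝ) : EReal)) atTop < ((2 : ℝ) : EReal))
    (hloss : Summable (energyLoss a b)) {l : ℝ} {u : ℕ → ℂ}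
    (hu : IsGeneralizedEigenvector a b l u) (hsum : Summable fun n => ‖u n‖ ^ 2) : u = 0 := by
  obtain ⟨r, hr, hbr⟩ := exists_lt_eventually_abs_sub_le_mul h_tendsto hb l
  have hloss_shift : Summable (energyLoss a fun n => b n - l) := by
    have h_eq : (energyLoss a fun n => b n - l) = energyLoss a b := by
      ext n
      simp only [energyLoss, sub_sub_sub_cancel_right]
    rwa [h_eq]
  refine eq_zero_of_summable_norm_sq_of_recurrence hr ha ha2 hbr hloss_shift (fun n => ?_) hsum
  have h := hu n
  simp only [jacobiAct] at h
  simp only [Complex.real_smul, Complex.ofReal_sub]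
  linear_combination h

theorem mem_spectrumW_jacobiAct_of_forall_eq_zero {l : ℂ}
    (h : ∀ u, IsGeneralizedEigenvector a b l u → MemL2w (fun _ => 1) u → u = 0) :
    l ∈ spectrumW (fun _ => 1) (jacobiAct a b) := by
  intro h_bij
  obtain ⟨x, hx, hxl⟩ := h_bij.2 (lp.single 2 0 1 : ℓ²(ℕ, ℂ)) (memL2w_one_iff_exists.2 ⟨_, rfl⟩)
  have hx0 : x = 0 := h x (fun n => sub_eq_zero.1 (by simpa using congrFun hxl (n + 1))) hx.1
  simpa [hx0, jacobiAct] using congrFun hxl 0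

end Jacobi

/-- Corollary B / Theorem 4.2: under conditions (a)–(e) the Jacobi matrix is
self-adjoint, has no eigenvalues, and its spectrum is all of ℝ. -/
theorem jacobi_selfAdjoint_no_eigen_spectrum_real_sq
    (a b : ℕ → ℝ) (ha : ∀ n, 0 < a n)
    (h1 : Tendsto a atTop atTop)
    (h2 : ¬ Summable fun n : ℕ => 1 / a n ^ 2)
    (h3 : Summable fun n : ℕ => max (-((a (n + 1) / a n) ^ 2 - 1)) 0)
    (h4 : limsup (fun n => ((|b n| / a n : ℝ) : EReal)) atTop < ((2 : ℝ) : EReal))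
    (h5 : Summable fun n : ℕ => |b (n + 1) - b n| / a n) :
    IsSelfAdjointW (fun _ => 1) (jacobiAct a b) ∧
    eigenW (fun _ => 1) (jacobiAct a b) = ∅ ∧
    spectrumW (fun _ => 1) (jacobiAct a b) = Set.range ((↑) : ℝ → ℂ) := by
  have h_selfAdjoint : IsSelfAdjoint (maximalOperator (jacobiLinearMap a b)) :=
    isSelfAdjoint_maximalOperator_jacobi ha (not_summable_one_div_of_not_summable_one_div_sq h2)
  have h_real : spectrumW (fun _ => 1) (jacobiAct a b) ⊆ Set.range ((↑) : ℝ → ℂ) :=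
    spectrumW_one_subset_range_ofReal (T := jacobiLinearMap a b) h_selfAdjoint
  have h_eq_zero (l : ℝ) (u : ℕ → ℂ) (hu : IsGeneralizedEigenvector a b l u)
      (hu_mem : MemL2w (fun _ => 1) u) : u = 0 :=
    hu.eq_zero_of_summable_norm_sq ha h1 h2 h4 (h3.add h5)
      (by simpa only [MemL2w, one_mul] using hu_mem)
  refine ⟨isSelfAdjointW_one_of_isSelfAdjoint (T := jacobiLinearMap a b) h_selfAdjoint, ?_,
    h_real.antisymm ?_⟩
  · refine Set.eq_empty_of_forall_notMem fun l hl => ?_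
    obtain ⟨l, rfl⟩ := h_real (eigenW_subset_spectrumW _ _ hl)
    obtain ⟨x, hx, hx_ne, hx_eigen⟩ := hl
    exact hx_ne (h_eq_zero l x (fun n => congrFun hx_eigen (n + 1)) hx.1)
  · rintro _ ⟨l, rfl⟩
    exact mem_spectrumW_jacobiAct_of_forall_eq_zero (h_eq_zero l)
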